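/- Let n ≥ 1, M > n and p > 2. There exists a sequence of centered probability measures dμ_k = f_k dγ on ℝⁿ with m_2(μ_k) ≤ M such that lim_{k→∞} δ(μ_k) = 0 while liminf_{k→∞} W_p(μ_k, γ) > 0. (Hence there is no general W_p-stability of the logarithmic Sobolev inequality on the class of centered probability measures with second moment at most M when p > 2 and M > n.) -/

import Mathlib

/-!
The counterexample is the symmetric mixture `μ = (1 - 2ε) γ + ε γ(· - v) + ε γ(· + v)` with
`|v| = s → ∞` and `ε = C s^(-p)`. It is centered and has second moment `n + 2 ε s²`
(`moment_mixDens`).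

Since `p > 2`, `ε s² = C s^(2-p) → 0`. By convexity, the Fisher information and the entropy of `μ`
are at most the corresponding averages over the components, namely `2 ε s²` and `ε s²`
(`fisherInfo_mixDens`, `relEnt_mixDens`), and both are nonnegative. Hence both tend to `0`, and so
does the deficit.

On the other hand the bumps carry a `p`-th moment of constant order `ε s^p = C`. A coupling `q` of
`μ` and `γ` satisfies `m_p(μ) ≤ 2^(p-1) (∫ |x - y|^p dq + m_p(γ))`, so for `C` large (`bumpMass`)
the transport cost is at least `1`; the product coupling bounds it above uniformly
(`wasserstein_mixDens`). The translated Gaussians are handled through the Cameron–Martin identity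
`e^{⟨v,x⟩ - |v|²/2} dγ = dγ(· - v)` (`densMeasure_exp`).
-/

open MeasureTheory Filter Real Topology

noncomputable section

/-- Euclidean space `ℝⁿ`. -/
abbrev En (n : ℕ) := EuclideanSpace ℝ (Fin n)

/-- The standard Gaussian measure `dγ = (2π)^{-n/2} e^{-|x|²/2} dx` on `ℝⁿ`. -/
def stdGauss (n : ℕ) : Measure (En n) :=
  (volume : Measure (En n)).withDensity
    (fun x => ENNReal.ofReal ((2 * π) ^ (-(n : ℝ) / 2) * Real.exp (-‖x‖ ^ 2 / 2)))

/-- The probability measure `dμ = f dγ` with density `f` with respect to the Gaussian. -/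
def densMeasure {n : ℕ} (f : En n → ℝ) : Measure (En n) :=
  (stdGauss n).withDensity (fun x => ENNReal.ofReal (f x))

/-- Relative entropy `H(μ) = ∫ f log f dγ` of `dμ = f dγ`. -/
def relEnt {n : ℕ} (f : En n → ℝ) : ℝ :=
  ∫ x, f x * Real.log (f x) ∂(stdGauss n)

/-- Fisher information `I(μ) = ∫ |∇f|²/f dγ` of `dμ = f dγ`. -/
def fisherInfo {n : ℕ} (f : En n → ℝ) : ℝ :=
  ∫ x, ‖gradient f x‖ ^ 2 / f x ∂(stdGauss n)

/-- Deficit of the logarithmic Sobolev inequality, `δ(μ) = I(μ)/2 − H(μ)`. -/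
def lsiDeficit {n : ℕ} (f : En n → ℝ) : ℝ :=
  fisherInfo f / 2 - relEnt f

/-- The `p`-th moment `m_p(μ) = ∫ |x|^p dμ`. -/
def moment {n : ℕ} (p : ℝ) (μ : Measure (En n)) : ℝ := ∫ x, ‖x‖ ^ p ∂μ

/-- A measure is centered if `∫ x dμ = 0`. -/
def IsCentered {n : ℕ} (μ : Measure (En n)) : Prop := (∫ x, x ∂μ) = 0

/-- `π'` is a coupling of `μ` and `ν`. -/
def IsCoupling {n : ℕ} (π' : Measure (En n × En n)) (μ ν : Measure (En n)) : Prop :=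
  IsProbabilityMeasure π' ∧ π'.map Prod.fst = μ ∧ π'.map Prod.snd = ν

/-- Wasserstein distance of order `p`:
`W_p(μ,ν) = inf_π (∫∫ |x−y|^p dπ)^{1/p}` over couplings `π`. -/
def wasserstein {n : ℕ} (p : ℝ) (μ ν : Measure (En n)) : ℝ :=
  ((⨅ (π' : Measure (En n × En n)) (_ : IsCoupling π' μ ν),
      ∫⁻ z, ENNReal.ofReal (‖z.1 - z.2‖ ^ p) ∂π') ^ (1 / p)).toReal

/-- Deficit of Talagrand's inequality, `δ_Tal(μ) = 2H(μ) − W₂²(μ,γ)` for `dμ = f dγ`. -/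
def talDeficit {n : ℕ} (f : En n → ℝ) : ℝ :=
  2 * relEnt f - wasserstein 2 (densMeasure f) (stdGauss n) ^ 2

/-- The `L^p(dμ)` norm of a real function. -/
def LpNorm {n : ℕ} (p : ℝ) (μ : Measure (En n)) (u : En n → ℝ) : ℝ :=
  (∫ x, |u x| ^ p ∂μ) ^ (1 / p)

/-! ### Gaussian integrals -/

/-- The density definition agrees with Mathlib's Gaussian: both measures have the same
characteristic function. -/
lemma stdGauss_eq (n : ℕ) : stdGauss n = ProbabilityTheory.stdGaussian (En n) := by
  have hc : (0 : ℝ) < (2 * π) ^ (-(n : ℝ) / 2) := by positivity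
  have hint : Integrable (fun x : En n =>
      (2 * π) ^ (-(n : ℝ) / 2) * Real.exp (-‖x‖ ^ 2 / 2)) volume := by
    refine Integrable.const_mul ?_ _
    -- a non-integrable function would have Bochner integral `0`, but this integral is positive
    by_contra h
    have h1 := GaussianFourier.integral_rexp_neg_mul_sq_norm (V := En n) (b := 1 / 2) (by norm_num)
    have h2 : (fun v : En n => rexp (-(1 / 2) * ‖v‖ ^ 2)) = fun x => rexp (-‖x‖ ^ 2 / 2) := by
      ext x; congr 1; ring
    rw [h2, integral_undef h] at h1
    have : 0 < (π / (1 / 2)) ^ (Module.finrank ℝ (En n) / 2 : ℝ) := by positivity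
    exact this.ne h1
  have : IsFiniteMeasure (stdGauss n) := isFiniteMeasure_withDensity_ofReal hint.2
  apply Measure.ext_of_charFun
  ext t
  rw [ProbabilityTheory.charFun_stdGaussian, charFun_apply, stdGauss,
    integral_withDensity_eq_integral_toReal_smul (by fun_prop) (by simp)]
  have h3 := GaussianFourier.integral_cexp_neg_mul_sq_norm_add (V := En n) (b := 1 / 2)
    (by norm_num) Complex.I t
  have h4 : ∀ x : En n, (ENNReal.ofReal ((2 * π) ^ (-(n : ℝ) / 2) *
      rexp (-‖x‖ ^ 2 / 2))).toReal • Complex.exp (inner ℝ x t * Complex.I) =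
      (((2 * π) ^ (-(n : ℝ) / 2) : ℝ) : ℂ) *
        Complex.exp (-(1 / 2) * ‖x‖ ^ 2 + Complex.I * inner ℝ t x) := by
    intro x
    rw [ENNReal.toReal_ofReal (by positivity), Complex.real_smul, real_inner_comm, Complex.exp_add]
    push_cast
    rw [mul_assoc]
    congr 3
    · ring
    · ring
  simp_rw [h4]
  rw [integral_const_mul, h3, ← mul_assoc]
  have h5 : (((2 * π) ^ (-(n : ℝ) / 2) : ℝ) : ℂ) *
      (π / (1 / 2)) ^ (Module.finrank ℝ (En n) / 2 : ℂ) = 1 := by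
    have : ((π : ℂ) / (1 / 2)) ^ (Module.finrank ℝ (En n) / 2 : ℂ) =
        (((2 * π) ^ ((n : ℝ) / 2) : ℝ) : ℂ) := by
      rw [Complex.ofReal_cpow (by positivity)]
      simp
      congr 1
      ring
    rw [this, ← Complex.ofReal_mul, ← Real.rpow_add (by positivity)]
    simp [neg_div]
  rw [h5, one_mul]
  congr 1
  rw [Complex.I_sq]
  ring

instance stdGauss_prob (n : ℕ) : IsProbabilityMeasure (stdGauss n) := by
  rw [stdGauss_eq]; infer_instance

instance stdGauss_gaussian (n : ℕ) : ProbabilityTheory.IsGaussian (stdGauss n) := by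
  rw [stdGauss_eq]; infer_instance

lemma integrable_id_stdGauss (n : ℕ) : Integrable (fun x : En n => x) (stdGauss n) :=
  ProbabilityTheory.IsGaussian.integrable_fun_id

lemma integral_id_stdGauss (n : ℕ) : ∫ x, x ∂(stdGauss n) = 0 := by
  rw [stdGauss_eq, ProbabilityTheory.integral_id_stdGaussian]

lemma integrable_inner_stdGauss {n : ℕ} (v : En n) :
    Integrable (fun x : En n => inner ℝ v x) (stdGauss n) :=
  (integrable_id_stdGauss n).const_inner v

lemma integral_inner_stdGauss {n : ℕ} (v : En n) : ∫ x, inner ℝ v x ∂(stdGauss n) = 0 := by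
  rw [integral_inner (integrable_id_stdGauss n), integral_id_stdGauss, inner_zero_right]

lemma integrable_sq_stdGauss (n : ℕ) : Integrable (fun x : En n => ‖x‖ ^ 2) (stdGauss n) :=
  (ProbabilityTheory.IsGaussian.memLp_id (stdGauss n) 2 (by simp)).integrable_norm_pow (by simp)

lemma integral_sq_stdGauss (n : ℕ) : ∫ x, ‖x‖ ^ 2 ∂(stdGauss n) = n := by
  have hmem : ∀ i : Fin n, MemLp (fun x : En n => x i) 2 (stdGauss n) := fun i =>
    ProbabilityTheory.IsGaussian.memLp_dual (stdGauss n)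
      (EuclideanSpace.proj i : En n →L[ℝ] ℝ) 2 (by simp)
  have hvar : ∀ i : Fin n, ∫ x : En n, (x i) ^ 2 ∂(stdGauss n) = 1 := by
    intro i
    have h := ProbabilityTheory.variance_eval_multivariateGaussian
      (μ := (0 : En n)) (S := (1 : Matrix (Fin n) (Fin n) ℝ)) Matrix.PosSemidef.one i
    rw [ProbabilityTheory.multivariateGaussian_zero_one, ← stdGauss_eq,
      ProbabilityTheory.variance_eq_sub (hmem i)] at h
    have h0 : ∫ x : En n, x i ∂(stdGauss n) = 0 := by
      have := (EuclideanSpace.proj i : En n →L[ℝ] ℝ).integral_comp_comm (integrable_id_stdGauss n)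
      rw [integral_id_stdGauss, map_zero] at this
      simpa using this
    simpa [h0] using h
  simp_rw [EuclideanSpace.real_norm_sq_eq]
  rw [integral_finsetSum _ (fun i _ => (hmem i).integrable_sq)]
  simp [hvar]

lemma lintegral_pow_stdGauss_lt_top (n : ℕ) {p : ℝ} (hp : 0 < p) :
    ∫⁻ x, ‖x‖ₑ ^ p ∂(stdGauss n) < ⊤ := by
  have h := ProbabilityTheory.IsGaussian.memLp_id (stdGauss n) (ENNReal.ofReal p) (by simp)
  have := lintegral_rpow_enorm_lt_top_of_eLpNorm_lt_top (by simpa using hp) (by simp) h.2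
  simpa [ENNReal.toReal_ofReal hp.le] using this

/-- Exponential tilting of the Gaussian is translation (Cameron–Martin). -/
lemma densMeasure_exp {n : ℕ} (v : En n) :
    densMeasure (fun x => rexp (inner ℝ v x - ‖v‖ ^ 2 / 2)) =
      (stdGauss n).map (fun x => x + v) := by
  ext s hs
  rw [Measure.map_apply (by fun_prop) hs, densMeasure, stdGauss,
    ← withDensity_mul _ (by fun_prop) (by fun_prop), withDensity_apply _ hs,
    withDensity_apply _ (hs.preimage (by fun_prop)), ← lintegral_indicator hs,
    ← lintegral_indicator (hs.preimage (by fun_prop)),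
    ← lintegral_add_right_eq_self (μ := volume) _ v]
  refine lintegral_congr fun x => ?_
  by_cases hx : x + v ∈ s
  · rw [Set.indicator_of_mem hx, Set.indicator_of_mem (by exact hx), Pi.mul_apply,
      ← ENNReal.ofReal_mul (by positivity), mul_assoc, ← Real.exp_add]
    congr 3
    rw [norm_add_sq_real, inner_add_right, real_inner_self_eq_norm_sq, real_inner_comm]
    ring
  · rw [Set.indicator_of_notMem hx, Set.indicator_of_notMem (by exact hx)]

/-! ### The mixture: mass, mean, second moment, Fisher information and entropy -/

/-- The density `dγ(· - v)/dγ` of the Gaussian translated by `v`. -/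
def tilt {n : ℕ} (v x : En n) : ℝ := rexp (inner ℝ v x - ‖v‖ ^ 2 / 2)

/-- The density with respect to `γ` of the mixture `(1 - 2ε) γ + ε γ(· - v) + ε γ(· + v)`. -/
def mixDens {n : ℕ} (ε : ℝ) (v x : En n) : ℝ :=
  (1 - 2 * ε) + ε * tilt v x + ε * tilt (-v) x

lemma tilt_pos {n : ℕ} (v x : En n) : 0 < tilt v x := Real.exp_pos _

lemma measurable_tilt {n : ℕ} (v : En n) : Measurable (tilt v) := by
  unfold tilt; fun_prop

lemma withDensity_tilt {n : ℕ} (v : En n) :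
    (stdGauss n).withDensity (fun x => ENNReal.ofReal (tilt v x)) =
      (stdGauss n).map (fun x => x + v) := densMeasure_exp v

lemma integrable_tilt_mul {n : ℕ} (v : En n) {g : En n → ℝ}
    (hg : Integrable (fun x => g (x + v)) (stdGauss n)) :
    Integrable (fun x => tilt v x * g x) (stdGauss n) := by
  have h1 : Integrable g ((stdGauss n).map (fun x => x + v)) :=
    ((measurableEmbedding_addRight v).integrable_map_iff).2 hg
  rw [← withDensity_tilt, integrable_withDensity_iff_integrable_smul'
    (measurable_tilt v).ennreal_ofReal (by simp)] at h1
  simpa [ENNReal.toReal_ofReal (tilt_pos v _).le] using h1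

lemma integral_tilt_mul {n : ℕ} (v : En n) (g : En n → ℝ) :
    ∫ x, tilt v x * g x ∂(stdGauss n) = ∫ x, g (x + v) ∂(stdGauss n) := by
  have h1 : ∫ x, g x ∂((stdGauss n).map (fun x => x + v)) = ∫ x, g (x + v) ∂(stdGauss n) :=
    (measurableEmbedding_addRight v).integral_map g
  rw [← withDensity_tilt, integral_withDensity_eq_integral_toReal_smul
    (measurable_tilt v).ennreal_ofReal (by simp)] at h1
  simpa [ENNReal.toReal_ofReal (tilt_pos v _).le] using h1

lemma mixDens_pos {n : ℕ} {ε : ℝ} (hε : 0 < ε) (hε' : 2 * ε ≤ 1)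
    (v x : En n) : 0 < mixDens ε v x := by
  have := mul_pos hε (tilt_pos v x)
  have := mul_pos hε (tilt_pos (-v) x)
  unfold mixDens
  linarith

lemma densMeasure_mixDens {n : ℕ} {ε : ℝ} (hε : 0 < ε) (hε' : 2 * ε ≤ 1)
    (v : En n) :
    densMeasure (mixDens ε v) = ENNReal.ofReal (1 - 2 * ε) • stdGauss n +
      ENNReal.ofReal ε • (stdGauss n).map (fun x => x + v) +
      ENNReal.ofReal ε • (stdGauss n).map (fun x => x + -v) := by
  have h : (fun x => ENNReal.ofReal (mixDens ε v x)) =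
      (fun _ => ENNReal.ofReal (1 - 2 * ε)) +
      ENNReal.ofReal ε • (fun x => ENNReal.ofReal (tilt v x)) +
      ENNReal.ofReal ε • (fun x => ENNReal.ofReal (tilt (-v) x)) := by
    ext x
    have h1 := (tilt_pos v x).le
    have h2 := (tilt_pos (-v) x).le
    simp only [mixDens, Pi.add_apply, Pi.smul_apply, smul_eq_mul]
    rw [ENNReal.ofReal_add (add_nonneg (by linarith) (by positivity)) (by positivity),
      ENNReal.ofReal_add (by linarith) (by positivity), ENNReal.ofReal_mul hε.le,
      ENNReal.ofReal_mul hε.le]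
  have m1 := (measurable_tilt v).ennreal_ofReal
  have m2 := (measurable_tilt (-v)).ennreal_ofReal
  rw [densMeasure, h, withDensity_add_right _ (m2.const_smul _),
    withDensity_add_right _ (m1.const_smul _), withDensity_smul _ m1, withDensity_smul _ m2,
    withDensity_const, withDensity_tilt, withDensity_tilt]

lemma isProbabilityMeasure_mixDens {n : ℕ} {ε : ℝ} (hε : 0 < ε) (hε' : 2 * ε ≤ 1)
    (v : En n) : IsProbabilityMeasure (densMeasure (mixDens ε v)) := by
  constructor
  rw [densMeasure_mixDens hε hε' v]
  have h1 : ((stdGauss n).map (fun x => x + v)) Set.univ = 1 := by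
    rw [Measure.map_apply (by fun_prop) .univ]; simp
  have h2 : ((stdGauss n).map (fun x => x + -v)) Set.univ = 1 := by
    rw [Measure.map_apply (by fun_prop) .univ]; simp
  simp only [Measure.add_apply, Measure.smul_apply, h1, h2, measure_univ, smul_eq_mul, mul_one]
  rw [← ENNReal.ofReal_add (by linarith) hε.le, ← ENNReal.ofReal_add (by linarith) hε.le]
  ring_nf
  simp

lemma integral_mixDens {n : ℕ} {ε : ℝ} (hε : 0 < ε) (hε' : 2 * ε ≤ 1)
    (v : En n) {F : Type*} [NormedAddCommGroup F] [NormedSpace ℝ F] {g : En n → F}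
    (h0 : Integrable g (stdGauss n))
    (h1 : Integrable (fun x => g (x + v)) (stdGauss n))
    (h2 : Integrable (fun x => g (x + -v)) (stdGauss n)) :
    ∫ x, g x ∂(densMeasure (mixDens ε v)) =
      (1 - 2 * ε) • ∫ x, g x ∂(stdGauss n) + ε • ∫ x, g (x + v) ∂(stdGauss n) +
        ε • ∫ x, g (x + -v) ∂(stdGauss n) := by
  have k1 : Integrable g ((stdGauss n).map (fun x => x + v)) :=
    ((measurableEmbedding_addRight v).integrable_map_iff).2 h1
  have k2 : Integrable g ((stdGauss n).map (fun x => x + -v)) :=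
    ((measurableEmbedding_addRight (-v)).integrable_map_iff).2 h2
  rw [densMeasure_mixDens hε hε' v, integral_add_measure, integral_add_measure,
    integral_smul_measure, integral_smul_measure, integral_smul_measure,
    (measurableEmbedding_addRight v).integral_map, (measurableEmbedding_addRight (-v)).integral_map,
    ENNReal.toReal_ofReal hε.le, ENNReal.toReal_ofReal (by linarith)]
  · exact h0.smul_measure (by simp)
  · exact k1.smul_measure (by simp)
  · exact (h0.smul_measure (by simp)).add_measure (k1.smul_measure (by simp))
  · exact k2.smul_measure (by simp)

lemma isCentered_mixDens {n : ℕ} {ε : ℝ} (hε : 0 < ε) (hε' : 2 * ε ≤ 1)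
    (v : En n) : IsCentered (densMeasure (mixDens ε v)) := by
  have h0 := integrable_id_stdGauss n
  rw [IsCentered, integral_mixDens hε hε' v h0 (h0.add (integrable_const _))
    (h0.add (integrable_const _)), integral_add h0 (integrable_const _),
    integral_add h0 (integrable_const _), integral_id_stdGauss]
  simp

lemma norm_sq_shift {n : ℕ} (v : En n) :
    Integrable (fun x : En n => ‖x + v‖ ^ 2) (stdGauss n) ∧
      ∫ x, ‖x + v‖ ^ 2 ∂(stdGauss n) = n + ‖v‖ ^ 2 := by
  have h : (fun x : En n => ‖x + v‖ ^ 2) =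
      fun x => (‖x‖ ^ 2 + 2 * inner ℝ v x) + ‖v‖ ^ 2 := by
    ext x; rw [norm_add_sq_real, real_inner_comm]
  have i1 := integrable_sq_stdGauss n
  have i2 := (integrable_inner_stdGauss v).const_mul 2
  have i3 : Integrable (fun x : En n => ‖x‖ ^ 2 + 2 * inner ℝ v x) (stdGauss n) := i1.add i2
  rw [h]
  refine ⟨i3.add (integrable_const _), ?_⟩
  rw [integral_add i3 (integrable_const _), integral_add i1 i2, integral_const_mul,
    integral_inner_stdGauss, integral_sq_stdGauss]
  simp

lemma moment_mixDens {n : ℕ} {ε : ℝ} (hε : 0 < ε) (hε' : 2 * ε ≤ 1)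
    (v : En n) : moment 2 (densMeasure (mixDens ε v)) = n + 2 * ε * ‖v‖ ^ 2 := by
  obtain ⟨a1, a2⟩ := norm_sq_shift v
  obtain ⟨b1, b2⟩ := norm_sq_shift (-v)
  have := integral_mixDens hε hε' v (integrable_sq_stdGauss n) a1 b1
  rw [a2, b2, integral_sq_stdGauss] at this
  simp only [moment, Real.rpow_two, this, smul_eq_mul, norm_neg]
  ring

lemma hasGradientAt_tilt {n : ℕ} (v x : En n) : HasGradientAt (tilt v) (tilt v x • v) x := by
  have h1 : HasGradientAt (fun y : En n => inner ℝ v y - ‖v‖ ^ 2 / 2) v x := by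
    rw [hasGradientAt_iff_hasFDerivAt]
    exact (InnerProductSpace.toDual ℝ (En n) v).hasFDerivAt.sub_const _
  rw [hasGradientAt_iff_hasFDerivAt] at h1 ⊢
  have h2 := h1.exp
  rw [← map_smul] at h2
  exact h2

lemma gradient_mixDens {n : ℕ} {ε : ℝ} (v x : En n) :
    gradient (mixDens ε v) x = (ε * (tilt v x - tilt (-v) x)) • v := by
  have h1 := (hasGradientAt_iff_hasFDerivAt.1 (hasGradientAt_tilt v x)).const_mul ε
  have h2 := (hasGradientAt_iff_hasFDerivAt.1 (hasGradientAt_tilt (-v) x)).const_mul ε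
  have h3 := (h1.const_add (1 - 2 * ε)).add h2
  rw [← map_smul, ← map_smul, ← map_add] at h3
  have hv : ε • tilt v x • v + ε • tilt (-v) x • -v = (ε * (tilt v x - tilt (-v) x)) • v := by
    module
  rw [hv] at h3
  exact HasGradientAt.gradient (hasGradientAt_iff_hasFDerivAt.2 h3)

lemma integral_tilt {n : ℕ} (v : En n) :
    Integrable (tilt v) (stdGauss n) ∧ ∫ x, tilt v x ∂(stdGauss n) = 1 := by
  have h1 := integrable_tilt_mul v (g := fun _ => 1) (integrable_const _)
  have h2 := integral_tilt_mul v (fun _ => 1)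
  simp at h1 h2
  exact ⟨h1, h2⟩

/-- By convexity of `(f, ∇f) ↦ |∇f|²/f`, the Fisher information of the mixture is at most
the weighted average of those of its components: `|v|²` for each bump, `0` for `γ`. -/
lemma fisherInfo_mixDens {n : ℕ} {ε : ℝ} (hε : 0 < ε) (hε' : 2 * ε ≤ 1)
    (v : En n) : 0 ≤ fisherInfo (mixDens ε v) ∧
    fisherInfo (mixDens ε v) ≤ 2 * ε * ‖v‖ ^ 2 := by
  have hpos := mixDens_pos hε hε' v
  have hnn : ∀ x, 0 ≤ ‖gradient (mixDens ε v) x‖ ^ 2 / mixDens ε v x := fun x =>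
    div_nonneg (by positivity) (hpos x).le
  obtain ⟨a1, a2⟩ := integral_tilt v
  obtain ⟨b1, b2⟩ := integral_tilt (-v)
  refine ⟨integral_nonneg hnn, ?_⟩
  have : 2 * ε * ‖v‖ ^ 2 = ∫ x, ε * ‖v‖ ^ 2 * (tilt v x + tilt (-v) x) ∂(stdGauss n) := by
    rw [integral_const_mul, integral_add a1 b1, a2, b2]; ring
  rw [this, fisherInfo]
  refine integral_mono_of_nonneg (.of_forall hnn) ((a1.add b1).const_mul _) (.of_forall fun x => ?_)
  have ta := tilt_pos v x
  have tb := tilt_pos (-v) x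
  have hf : ε * (tilt v x + tilt (-v) x) ≤ mixDens ε v x := by
    unfold mixDens; linarith
  simp only
  rw [div_le_iff₀ (hpos x), gradient_mixDens, norm_smul, mul_pow, Real.norm_eq_abs, sq_abs]
  calc (ε * (tilt v x - tilt (-v) x)) ^ 2 * ‖v‖ ^ 2
      ≤ (ε * (tilt v x + tilt (-v) x)) ^ 2 * ‖v‖ ^ 2 := by
        gcongr ?_ * _
        rw [mul_pow, mul_pow]
        gcongr ?_ * ?_
        nlinarith [mul_pos ta tb]
    _ = ε * ‖v‖ ^ 2 * (tilt v x + tilt (-v) x) * (ε * (tilt v x + tilt (-v) x)) := by ring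
    _ ≤ _ := by gcongr

lemma entropy_tilt {n : ℕ} (v : En n) :
    Integrable (fun x => tilt v x * Real.log (tilt v x)) (stdGauss n) ∧
      ∫ x, tilt v x * Real.log (tilt v x) ∂(stdGauss n) = ‖v‖ ^ 2 / 2 := by
  have h : ∀ x : En n, Real.log (tilt v (x + v)) = inner ℝ v x + ‖v‖ ^ 2 / 2 := by
    intro x
    rw [tilt, Real.log_exp, inner_add_right, real_inner_self_eq_norm_sq]; ring
  have i := integrable_inner_stdGauss v
  constructor
  · refine integrable_tilt_mul v (g := fun x => Real.log (tilt v x)) ?_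
    simp_rw [h]
    exact i.add (integrable_const _)
  · rw [integral_tilt_mul v (fun x => Real.log (tilt v x))]
    simp_rw [h]
    rw [integral_add i (integrable_const _), integral_inner_stdGauss]
    simp

/-- By convexity of `t ↦ t log t`, the entropy of the mixture is at most the weighted
average of those of its components (`|v|²/2` for each bump, `0` for `γ`); it is nonnegative because `t log t ≥ t - 1`. -/
lemma relEnt_mixDens {n : ℕ} {ε : ℝ} (hε : 0 < ε) (hε' : 2 * ε ≤ 1)
    (v : En n) : 0 ≤ relEnt (mixDens ε v) ∧ relEnt (mixDens ε v) ≤ ε * ‖v‖ ^ 2 := by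
  have hpos := mixDens_pos hε hε' v
  obtain ⟨a1, a2⟩ := integral_tilt v
  obtain ⟨b1, b2⟩ := integral_tilt (-v)
  obtain ⟨c1, c2⟩ := entropy_tilt v
  obtain ⟨d1, d2⟩ := entropy_tilt (-v)
  have i1 : Integrable (fun x => 1 - 2 * ε + ε * tilt v x) (stdGauss n) :=
    (integrable_const _).add (a1.const_mul ε)
  have imix : Integrable (mixDens ε v) (stdGauss n) := i1.add (b1.const_mul ε)
  have iup := (c1.const_mul ε).add (d1.const_mul ε)
  have hlow : ∀ x, mixDens ε v x - 1 ≤ mixDens ε v x * Real.log (mixDens ε v x) := by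
    intro x
    have h := Real.one_sub_inv_le_log_of_pos (hpos x)
    have := mul_le_mul_of_nonneg_left h (hpos x).le
    rwa [mul_sub, mul_one, mul_inv_cancel₀ (hpos x).ne'] at this
  have hup : ∀ x, mixDens ε v x * Real.log (mixDens ε v x) ≤
      ε * (tilt v x * Real.log (tilt v x)) + ε * (tilt (-v) x * Real.log (tilt (-v) x)) := by
    intro x
    set t := mixDens ε v x with ht
    -- the tangent line of `s ↦ s log s` at `t` lies below the graph
    have key : ∀ y : ℝ, 0 < y → y - t + y * Real.log t ≤ y * Real.log y := by
      intro y hy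
      have h := Real.one_sub_inv_le_log_of_pos (div_pos hy (hpos x))
      rw [Real.log_div hy.ne' (hpos x).ne', inv_div] at h
      have := mul_le_mul_of_nonneg_left h hy.le
      rw [mul_sub, mul_one, mul_div_cancel₀ _ hy.ne'] at this
      linarith
    have k0 := key 1 one_pos
    have k1 := key _ (tilt_pos v x)
    have k2 := key _ (tilt_pos (-v) x)
    rw [Real.log_one] at k0
    have e0 := mul_le_mul_of_nonneg_left k0 (show 0 ≤ 1 - 2 * ε by linarith)
    have e1 := mul_le_mul_of_nonneg_left k1 hε.le
    have e2 := mul_le_mul_of_nonneg_left k2 hε.le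
    have hsum : (1 - 2 * ε) * (1 - t + 1 * Real.log t) + ε * (tilt v x - t + tilt v x * Real.log t)
        + ε * (tilt (-v) x - t + tilt (-v) x * Real.log t) = t * Real.log t := by
      rw [ht, mixDens]; ring
    linarith
  have ient : Integrable (fun x => mixDens ε v x * Real.log (mixDens ε v x)) (stdGauss n) := by
    have hm : Measurable (mixDens ε v) := by
      have := measurable_tilt v
      have := measurable_tilt (-v)
      unfold mixDens; fun_prop
    refine integrable_of_le_of_le (by fun_prop) (.of_forall hlow) (.of_forall hup)
      (imix.sub (integrable_const _)) iup
  constructor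
  · have h := integral_mono (imix.sub (integrable_const (1 : ℝ))) ient hlow
    have h1 : ∫ x, (mixDens ε v x - 1) ∂(stdGauss n) = 0 := by
      rw [integral_sub imix (integrable_const _)]
      simp only [mixDens]
      rw [integral_add i1 (b1.const_mul ε), integral_add (integrable_const _) (a1.const_mul ε),
        integral_const_mul, integral_const_mul, a2, b2]
      simp; ring
    exact h1.symm.trans_le h
  · refine (integral_mono ient iup hup).trans_eq ?_
    simp only [Pi.add_apply]
    rw [integral_add (c1.const_mul ε) (d1.const_mul ε), integral_const_mul, integral_const_mul,
      c2, d2, norm_neg]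
    ring


/-! ### Moments and transport cost of the mixture -/

/-- The `p`-th absolute moment of a measure, as an extended nonnegative number. -/
def absMoment {n : ℕ} (p : ℝ) (μ : Measure (En n)) : ENNReal := ∫⁻ x, ‖x‖ₑ ^ p ∂μ

/-- The constant in `|a + b|^p ≤ 2^(p-1) (|a|^p + |b|^p)`. -/
def triConst (p : ℝ) : ENNReal := 2 ^ (p - 1)

lemma triConst_ne_top {p : ℝ} (hp : 1 ≤ p) : triConst p ≠ ⊤ :=
  ENNReal.rpow_ne_top_of_nonneg (by linarith) (by simp)

lemma triConst_ne_zero {p : ℝ} : triConst p ≠ 0 := by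
  simp [triConst]

lemma enorm_rpow_add_le {n : ℕ} {p : ℝ} (hp : 1 ≤ p) (a b : En n) :
    ‖a + b‖ₑ ^ p ≤ triConst p * (‖a‖ₑ ^ p + ‖b‖ₑ ^ p) :=
  (ENNReal.rpow_le_rpow (enorm_add_le a b) (by linarith)).trans
    (ENNReal.rpow_add_le_mul_rpow_add_rpow _ _ hp)

lemma ofReal_norm_rpow {n : ℕ} {p : ℝ} (hp0 : 0 ≤ p) (a : En n) :
    ENNReal.ofReal (‖a‖ ^ p) = ‖a‖ₑ ^ p := by
  rw [← ENNReal.ofReal_rpow_of_nonneg (norm_nonneg _) hp0, ofReal_norm]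

lemma absMoment_le_of_coupling {n : ℕ} {p : ℝ} (hp : 1 ≤ p)
    {μ ν : Measure (En n)} {q : Measure (En n × En n)} (h : IsCoupling q μ ν) :
    absMoment p μ ≤
      triConst p * ((∫⁻ z, ENNReal.ofReal (‖z.1 - z.2‖ ^ p) ∂q) + absMoment p ν) := by
  obtain ⟨_, rfl, rfl⟩ := h
  simp only [absMoment, ofReal_norm_rpow (show 0 ≤ p by linarith)]
  rw [lintegral_map (by fun_prop) (by fun_prop), lintegral_map (by fun_prop) (by fun_prop),
    ← lintegral_add_left (by fun_prop), ← lintegral_const_mul _ (by fun_prop)]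
  refine lintegral_mono fun z => ?_
  have := enorm_rpow_add_le hp (z.1 - z.2) z.2
  rwa [sub_add_cancel] at this

/-- The product coupling bounds the optimal transport cost by the `p`-th moments. -/
lemma iInf_coupling_le {n : ℕ} {p : ℝ} (hp : 1 ≤ p)
    {μ ν : Measure (En n)} [IsProbabilityMeasure μ] [IsProbabilityMeasure ν] :
    (⨅ (q : Measure (En n × En n)) (_ : IsCoupling q μ ν),
      ∫⁻ z, ENNReal.ofReal (‖z.1 - z.2‖ ^ p) ∂q) ≤
      triConst p * (absMoment p μ + absMoment p ν) := by
  have hc : IsCoupling (μ.prod ν) μ ν :=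
    ⟨inferInstance, by simp [Measure.map_fst_prod], by simp [Measure.map_snd_prod]⟩
  refine le_trans (iInf₂_le (μ.prod ν) hc) ?_
  simp only [ofReal_norm_rpow (show 0 ≤ p by linarith)]
  have h1 : absMoment p μ = ∫⁻ z, ‖z.1‖ₑ ^ p ∂(μ.prod ν) := by
    rw [absMoment]
    nth_rewrite 1 [← hc.2.1]
    rw [lintegral_map (by fun_prop) (by fun_prop)]
  have h2 : absMoment p ν = ∫⁻ z, ‖z.2‖ₑ ^ p ∂(μ.prod ν) := by
    rw [absMoment]
    nth_rewrite 1 [← hc.2.2]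
    rw [lintegral_map (by fun_prop) (by fun_prop)]
  rw [h1, h2, ← lintegral_add_left (by fun_prop), ← lintegral_const_mul _ (by fun_prop)]
  refine lintegral_mono fun z => ?_
  have := enorm_rpow_add_le hp z.1 (-z.2)
  rwa [← sub_eq_add_neg, enorm_neg] at this

/-- A value of `ε |v|^p` (weight of a bump times the `p`-th power of its distance to the origin)
large enough to keep the mixture at transport cost at least `1` from `γ`. -/
def bumpMass (n : ℕ) (p : ℝ) : ENNReal :=
  triConst p * (triConst p * (absMoment p (stdGauss n) + 1) + absMoment p (stdGauss n))

/-- A bound on the transport cost between `γ` and a mixture with `ε |v|^p = bumpMass n p`. -/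
def costBound (n : ℕ) (p : ℝ) : ENNReal :=
  triConst p * (absMoment p (stdGauss n) +
    triConst p * (absMoment p (stdGauss n) + bumpMass n p) +
    triConst p * (absMoment p (stdGauss n) + bumpMass n p) + absMoment p (stdGauss n))

lemma absMoment_stdGauss_ne_top {n : ℕ} {p : ℝ} (hp : 1 ≤ p) : absMoment p (stdGauss n) ≠ ⊤ :=
  (lintegral_pow_stdGauss_lt_top n (by linarith)).ne

lemma bumpMass_ne_top {n : ℕ} {p : ℝ} (hp : 1 ≤ p) : bumpMass n p ≠ ⊤ := by
  have h1 := triConst_ne_top hp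
  have h2 := absMoment_stdGauss_ne_top (n := n) hp
  unfold bumpMass
  finiteness

lemma bumpMass_ne_zero {n : ℕ} {p : ℝ} : bumpMass n p ≠ 0 := by
  have h1 := triConst_ne_zero (p := p)
  simp [bumpMass, h1]

lemma costBound_ne_top {n : ℕ} {p : ℝ} (hp : 1 ≤ p) : costBound n p ≠ ⊤ := by
  have h1 := triConst_ne_top hp
  have h2 := absMoment_stdGauss_ne_top (n := n) hp
  have h3 := bumpMass_ne_top (n := n) hp
  unfold costBound
  finiteness

lemma absMoment_mixDens {n : ℕ} {p ε : ℝ} (hε : 0 < ε) (hε' : 2 * ε ≤ 1) (v : En n) :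
    absMoment p (densMeasure (mixDens ε v)) =
      ENNReal.ofReal (1 - 2 * ε) * absMoment p (stdGauss n) +
      ENNReal.ofReal ε * (∫⁻ x, ‖x + v‖ₑ ^ p ∂(stdGauss n)) +
      ENNReal.ofReal ε * (∫⁻ x, ‖x + -v‖ₑ ^ p ∂(stdGauss n)) := by
  rw [absMoment, densMeasure_mixDens hε hε' v]
  simp only [lintegral_add_measure, lintegral_smul_measure, smul_eq_mul]
  rw [lintegral_map (by fun_prop) (by fun_prop), lintegral_map (by fun_prop) (by fun_prop)]
  rfl

lemma absMoment_mixDens_le {n : ℕ} {p ε : ℝ} (hp : 1 ≤ p) (hε : 0 < ε)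
    (hε' : 2 * ε ≤ 1) {v : En n} (hv : ENNReal.ofReal ε * ‖v‖ₑ ^ p = bumpMass n p) :
    absMoment p (densMeasure (mixDens ε v)) ≤ absMoment p (stdGauss n) +
      triConst p * (absMoment p (stdGauss n) + bumpMass n p) +
      triConst p * (absMoment p (stdGauss n) + bumpMass n p) := by
  have hbump : ∀ w : En n, ‖w‖ₑ = ‖v‖ₑ →
      ENNReal.ofReal ε * (∫⁻ x, ‖x + w‖ₑ ^ p ∂(stdGauss n)) ≤
        triConst p * (absMoment p (stdGauss n) + bumpMass n p) := by
    intro w hw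
    have h1 : ∫⁻ x, ‖x + w‖ₑ ^ p ∂(stdGauss n) ≤
        triConst p * (absMoment p (stdGauss n) + ‖v‖ₑ ^ p) := by
      calc ∫⁻ x, ‖x + w‖ₑ ^ p ∂(stdGauss n)
          ≤ ∫⁻ x, triConst p * (‖x‖ₑ ^ p + ‖v‖ₑ ^ p) ∂(stdGauss n) := by
            refine lintegral_mono fun x => ?_
            have := enorm_rpow_add_le hp x w
            rwa [hw] at this
        _ = _ := by
            rw [lintegral_const_mul _ (by fun_prop), lintegral_add_left (by fun_prop)]
            simp [absMoment]
    calc _ ≤ ENNReal.ofReal ε * (triConst p * (absMoment p (stdGauss n) + ‖v‖ₑ ^ p)) := by gcongr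
      _ = triConst p * (ENNReal.ofReal ε * absMoment p (stdGauss n) + bumpMass n p) := by
          rw [← hv]; ring
      _ ≤ triConst p * (1 * absMoment p (stdGauss n) + bumpMass n p) := by
          gcongr
          exact ENNReal.ofReal_le_one.2 (by linarith)
      _ = _ := by rw [one_mul]
  rw [absMoment_mixDens hε hε' v]
  refine add_le_add (add_le_add ?_ (hbump v rfl)) (hbump (-v) (enorm_neg v))
  calc _ ≤ 1 * absMoment p (stdGauss n) := by
        gcongr
        exact ENNReal.ofReal_le_one.2 (by linarith)
    _ = _ := one_mul _

lemma le_absMoment_mixDens {n : ℕ} {p ε : ℝ} (hp : 1 ≤ p) (hε : 0 < ε)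
    (hε' : 2 * ε ≤ 1) {v : En n} (hv : ENNReal.ofReal ε * ‖v‖ₑ ^ p = bumpMass n p) :
    triConst p * (absMoment p (stdGauss n) + 1) ≤ absMoment p (densMeasure (mixDens ε v)) := by
  have hK := triConst_ne_top hp
  have hK0 := triConst_ne_zero (p := p)
  have hG := absMoment_stdGauss_ne_top (n := n) hp
  set J := ∫⁻ x, ‖x + v‖ₑ ^ p ∂(stdGauss n) with hJ
  have h1 : ‖v‖ₑ ^ p ≤ triConst p * (J + absMoment p (stdGauss n)) := by
    calc ‖v‖ₑ ^ p = ∫⁻ _, ‖v‖ₑ ^ p ∂(stdGauss n) := by simp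
      _ ≤ ∫⁻ x, triConst p * (‖x + v‖ₑ ^ p + ‖x‖ₑ ^ p) ∂(stdGauss n) := by
          refine lintegral_mono fun x => ?_
          have := enorm_rpow_add_le hp (x + v) (-x)
          rwa [enorm_neg, add_neg_cancel_comm] at this
      _ = _ := by
          rw [lintegral_const_mul _ (by fun_prop), lintegral_add_left (by fun_prop)]
          rfl
  have h2 : bumpMass n p ≤ triConst p *
      (absMoment p (densMeasure (mixDens ε v)) + absMoment p (stdGauss n)) := by
    calc bumpMass n p
        ≤ ENNReal.ofReal ε * (triConst p * (J + absMoment p (stdGauss n))) := by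
          rw [← hv]; gcongr
      _ = triConst p * (ENNReal.ofReal ε * J + ENNReal.ofReal ε * absMoment p (stdGauss n)) := by
          ring
      _ ≤ triConst p *
          (absMoment p (densMeasure (mixDens ε v)) + 1 * absMoment p (stdGauss n)) := by
          gcongr
          · rw [absMoment_mixDens hε hε' v, ← hJ]
            exact le_add_right le_add_self
          · exact ENNReal.ofReal_le_one.2 (by linarith)
      _ = _ := by rw [one_mul]
  rw [bumpMass, ENNReal.mul_le_mul_iff_right hK0 hK] at h2
  exact (ENNReal.add_le_add_iff_right hG).1 h2

lemma wasserstein_mixDens {n : ℕ} {p ε : ℝ} (hp : 1 ≤ p) (hε : 0 < ε)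
    (hε' : 2 * ε ≤ 1) {v : En n} (hv : ENNReal.ofReal ε * ‖v‖ₑ ^ p = bumpMass n p) :
    1 ≤ wasserstein p (densMeasure (mixDens ε v)) (stdGauss n) ∧
      wasserstein p (densMeasure (mixDens ε v)) (stdGauss n) ≤
        (costBound n p ^ (1 / p)).toReal := by
  have hp0 : 0 ≤ 1 / p := by positivity
  have hK := triConst_ne_top hp
  have hK0 := triConst_ne_zero (p := p)
  have hG := absMoment_stdGauss_ne_top (n := n) hp
  have := isProbabilityMeasure_mixDens hε hε' v
  set c := ⨅ (q : Measure (En n × En n))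
    (_ : IsCoupling q (densMeasure (mixDens ε v)) (stdGauss n)),
      ∫⁻ z, ENNReal.ofReal (‖z.1 - z.2‖ ^ p) ∂q with hc
  have hup : c ≤ costBound n p := by
    refine (iInf_coupling_le hp).trans ?_
    unfold costBound
    gcongr
    exact absMoment_mixDens_le hp hε hε' hv
  have hlow : 1 ≤ c := by
    refine le_iInf₂ fun q hq => ?_
    have h := (le_absMoment_mixDens hp hε hε' hv).trans (absMoment_le_of_coupling hp hq)
    rw [ENNReal.mul_le_mul_iff_right hK0 hK, add_comm] at h
    exact (ENNReal.add_le_add_iff_right hG).1 h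
  have hB : costBound n p ^ (1 / p) ≠ ⊤ :=
    ENNReal.rpow_ne_top_of_nonneg hp0 (costBound_ne_top hp)
  have hle : c ^ (1 / p) ≤ costBound n p ^ (1 / p) := ENNReal.rpow_le_rpow hup hp0
  refine ⟨?_, ENNReal.toReal_mono hB hle⟩
  have h1 := ENNReal.rpow_le_rpow hlow hp0
  rw [ENNReal.one_rpow] at h1
  have h2 := ENNReal.toReal_mono (ne_top_of_le_ne_top hB hle) h1
  rwa [ENNReal.toReal_one] at h2

/-- No `W_p`-stability of the LSI for `p > 2` on `𝒫₂^M`, `M > n`. -/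
theorem lsi_instability_Wp_pgt2 (n : ℕ) (hn : 1 ≤ n) (M : ℝ) (hM : (n : ℝ) < M)
    (p : ℝ) (hp : 2 < p) :
    ∃ f : ℕ → En n → ℝ,
      (∀ k x, 0 ≤ f k x) ∧
      (∀ k, IsProbabilityMeasure (densMeasure (f k))) ∧
      (∀ k, IsCentered (densMeasure (f k))) ∧
      (∀ k, moment 2 (densMeasure (f k)) ≤ M) ∧
      Tendsto (fun k => lsiDeficit (f k)) atTop (𝓝 0) ∧
      0 < Filter.liminf
          (fun k => wasserstein p (densMeasure (f k)) (stdGauss n)) atTop := by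
  have hp1 : 1 ≤ p := by linarith
  set C : ℝ := (bumpMass n p).toReal with hC
  have hCpos : 0 < C := ENNReal.toReal_pos (bumpMass_ne_zero) (bumpMass_ne_top hp1)
  -- a bump of weight `C s^(-p)` at distance `s` has `p`-th moment of order `C`, while its
  -- contribution `C s^(2-p)` to the second moment vanishes as `s → ∞`
  have hlim1 : Tendsto (fun s : ℝ => C * s ^ (-p)) atTop (𝓝 0) := by
    simpa using (tendsto_rpow_neg_atTop (show 0 < p by linarith)).const_mul C
  have hlim2 : Tendsto (fun s : ℝ => C * s ^ (-p) * s ^ 2) atTop (𝓝 0) := by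
    have h : Tendsto (fun s : ℝ => C * s ^ (-(p - 2))) atTop (𝓝 0) := by
      simpa using (tendsto_rpow_neg_atTop (show 0 < p - 2 by linarith)).const_mul C
    refine h.congr' ?_
    filter_upwards [eventually_gt_atTop 0] with s hs
    rw [mul_assoc, ← Real.rpow_natCast s 2, ← Real.rpow_add hs]
    congr 2
    push_cast
    ring
  obtain ⟨s₀, hs₀⟩ := eventually_atTop.1
    ((hlim1.eventually (ge_mem_nhds (show (0 : ℝ) < 1 / 2 by norm_num))).and
      ((hlim2.eventually (ge_mem_nhds (show 0 < (M - n) / 2 by linarith))).and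
        (eventually_gt_atTop (0 : ℝ))))
  let s : ℕ → ℝ := fun k => s₀ + k
  have hs : ∀ k, s₀ ≤ s k := fun k => le_add_of_nonneg_right (Nat.cast_nonneg k)
  have hs_lim : Tendsto s atTop atTop :=
    tendsto_atTop_add_const_left _ _ tendsto_natCast_atTop_atTop
  let ε : ℕ → ℝ := fun k => C * s k ^ (-p)
  let v : ℕ → En n := fun k => EuclideanSpace.single (⟨0, hn⟩ : Fin n) (s k)
  have hspos : ∀ k, 0 < s k := fun k => (hs₀ _ (hs k)).2.2
  have hnorm : ∀ k, ‖v k‖ = s k := fun k => by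
    simp [v, abs_of_pos (hspos k)]
  have hε : ∀ k, 0 < ε k := fun k => mul_pos hCpos (Real.rpow_pos_of_pos (hspos k) _)
  have hε' : ∀ k, 2 * ε k ≤ 1 := fun k => by
    have : ε k ≤ 1 / 2 := (hs₀ _ (hs k)).1
    linarith
  have hv : ∀ k, ENNReal.ofReal (ε k) * ‖v k‖ₑ ^ p = bumpMass n p := fun k => by
    rw [← ofReal_norm_rpow (by linarith), ← ENNReal.ofReal_mul (hε k).le, hnorm, mul_assoc,
      ← Real.rpow_add (hspos k), neg_add_cancel, Real.rpow_zero, mul_one,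
      ENNReal.ofReal_toReal (bumpMass_ne_top hp1)]
  have hεv : Tendsto (fun k => ε k * ‖v k‖ ^ 2) atTop (𝓝 0) := by
    simp_rw [hnorm]
    exact hlim2.comp hs_lim
  have hW := fun k => wasserstein_mixDens hp1 (hε k) (hε' k) (hv k)
  refine ⟨fun k => mixDens (ε k) (v k), fun k x => (mixDens_pos (hε k) (hε' k) _ x).le,
    fun k => isProbabilityMeasure_mixDens (hε k) (hε' k) _,
    fun k => isCentered_mixDens (hε k) (hε' k) _, fun k => ?_, ?_, ?_⟩
  · rw [moment_mixDens (hε k) (hε' k), hnorm]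
    have : ε k * s k ^ 2 ≤ (M - n) / 2 := (hs₀ _ (hs k)).2.1
    linarith
  · have hI : Tendsto (fun k => fisherInfo (mixDens (ε k) (v k))) atTop (𝓝 0) :=
      squeeze_zero (fun k => (fisherInfo_mixDens (hε k) (hε' k) _).1)
        (fun k => (fisherInfo_mixDens (hε k) (hε' k) _).2)
        (by simpa [mul_assoc] using hεv.const_mul 2)
    have hH : Tendsto (fun k => relEnt (mixDens (ε k) (v k))) atTop (𝓝 0) :=
      squeeze_zero (fun k => (relEnt_mixDens (hε k) (hε' k) _).1)
        (fun k => (relEnt_mixDens (hε k) (hε' k) _).2) hεv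
    simpa [lsiDeficit] using (hI.div_const 2).sub hH
  · -- the upper bound matters: the real `liminf` of an unbounded sequence may be a junk value
    have hbdd : IsBoundedUnder (· ≤ ·) atTop
        (fun k => wasserstein p (densMeasure (mixDens (ε k) (v k))) (stdGauss n)) :=
      isBoundedUnder_of ⟨_, fun k => (hW k).2⟩
    exact one_pos.trans_le
      (le_liminf_of_le hbdd.isCoboundedUnder_ge (.of_forall fun k => (hW k).1))
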